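/- arXiv:2406.10772 — 2 statements merged into one kernel-verified Lean document; each statement's English description precedes it below -/
import Mathlib

section
/- Let p ∈ (0,1), λ = min(p, 1−p), let q ≥ 2 be real, and set γ = λ^{1/2 − 1/q} / √(q−1). Then for every f : {−1,1}^n → ℝ, under the p-biased measure μ one has ‖T_γ f‖_q ≤ ‖f‖₂. -/
open Filter Function Real

noncomputable def pwt (p : ℝ) {n : ℕ} (x : Fin n → Bool) : ℝ :=
  ∏ i, if x i then p else 1 - p

noncomputable def pE (p : ℝ) {n : ℕ} (f : (Fin n → Bool) → ℝ) : ℝ :=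
  ∑ x, pwt p x * f x

noncomputable def pNorm (p q : ℝ) {n : ℕ} (f : (Fin n → Bool) → ℝ) : ℝ :=
  (pE p fun x => |f x| ^ q) ^ (1 / q)

noncomputable def pVar (p : ℝ) {n : ℕ} (f : (Fin n → Bool) → ℝ) : ℝ :=
  pE p (fun x => f x ^ 2) - (pE p f) ^ 2

noncomputable def condE (p : ℝ) {n : ℕ} (i : Fin n) (f : (Fin n → Bool) → ℝ) :
    (Fin n → Bool) → ℝ :=
  fun x => (1 - p) * f (Function.update x i false) + p * f (Function.update x i true)

noncomputable def chi (p : ℝ) {n : ℕ} (S : Finset (Fin n)) (x : Fin n → Bool) : ℝ :=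
  ∏ i ∈ S, ((if x i then (1:ℝ) else -1) - (2 * p - 1)) / (2 * Real.sqrt (p * (1 - p)))

noncomputable def fhat (p : ℝ) {n : ℕ} (f : (Fin n → Bool) → ℝ) (S : Finset (Fin n)) : ℝ :=
  pE p fun x => f x * chi p S x

noncomputable def noiseOp (p δ : ℝ) {n : ℕ} (f : (Fin n → Bool) → ℝ) :
    (Fin n → Bool) → ℝ :=
  fun x => ∑ S : Finset (Fin n), δ ^ S.card * fhat p f S * chi p S x

lemma hc_deriv (q : ℝ) (hq : 2 ≤ q) (x : ℝ) :
    HasDerivAt (fun x : ℝ => |x| ^ (q - 2) * x) ((q - 1) * |x| ^ (q - 2)) x := by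
  rcases eq_or_lt_of_le hq with h | h
  · subst h
    simp only [sub_self, Real.rpow_zero, one_mul, mul_one]
    exact (hasDerivAt_id x).congr_deriv (by norm_num)
  · rcases lt_trichotomy x 0 with hx | hx | hx
    · have h1 : HasDerivAt (fun x : ℝ => -((-x) ^ (q - 1))) ((q - 1) * |x| ^ (q - 2)) x := by
        have := ((hasDerivAt_neg x).rpow_const (p := q - 1) (Or.inr (by linarith))).neg
        refine HasDerivAt.congr_deriv this ?_
        rw [abs_of_neg hx, show q - 1 - 1 = q - 2 by ring]; ring
      refine h1.congr_of_eventuallyEq ?_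
      filter_upwards [Iio_mem_nhds hx] with y hy
      have hy' : y < 0 := hy
      rw [abs_of_neg hy', show q - 1 = (q - 2) + 1 by ring, Real.rpow_add_one (by linarith)]
      ring
    · subst hx
      rw [hasDerivAt_iff_tendsto_slope]
      have hc : Tendsto (fun x : ℝ => |x| ^ (q - 2)) (nhds 0) (nhds (|0| ^ (q - 2))) :=
        ((continuous_abs.rpow_const (fun _ => Or.inr (by linarith))).tendsto 0)
      have h0 : (|(0:ℝ)|) ^ (q - 2) = 0 := by
        rw [abs_zero, Real.zero_rpow (by linarith)]
      rw [h0] at hc ⊢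
      rw [mul_zero]
      refine (hc.mono_left nhdsWithin_le_nhds).congr' ?_
      filter_upwards [self_mem_nhdsWithin] with y hy
      have hy' : y ≠ 0 := hy
      simp [slope_def_field]
      field_simp
    · have h1 : HasDerivAt (fun x : ℝ => x ^ (q - 1)) ((q - 1) * |x| ^ (q - 2)) x := by
        have := (hasDerivAt_id x).rpow_const (p := q - 1) (Or.inr (by linarith))
        refine HasDerivAt.congr_deriv this ?_
        rw [abs_of_pos hx, show q - 1 - 1 = q - 2 by ring]; simp
      refine h1.congr_of_eventuallyEq ?_
      filter_upwards [Ioi_mem_nhds hx] with y hy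
      have hy' : 0 < y := hy
      rw [abs_of_pos hy', show q - 1 = (q - 2) + 1 by ring, Real.rpow_add_one (by linarith)]

lemma hc_young (q : ℝ) (hq : 2 ≤ q) (A z G M : ℝ) (hG : 0 < G) (hM : 0 < M) :
    |A| ^ (q - 2) * z ^ 2 ≤
      G ^ (1 - 2 / q) * M ^ (2 / q) * ((1 - 2 / q) * (|A| ^ q / G) + 2 / q * (|z| ^ q / M)) := by
  have hq0 : 0 < q := by linarith
  have hw : 0 ≤ 1 - 2 / q := by
    rw [sub_nonneg, div_le_one hq0]; exact hq
  have hy := Real.geom_mean_le_arith_mean2_weighted (w₁ := 1 - 2 / q) (w₂ := 2 / q)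
    (p₁ := |A| ^ q / G) (p₂ := |z| ^ q / M) hw (by positivity) (by positivity) (by positivity)
    (by ring)
  refine le_trans (le_of_eq ?_) (mul_le_mul_of_nonneg_left hy (by positivity))
  rw [Real.div_rpow (by positivity) hG.le, Real.div_rpow (by positivity) hM.le,
    ← Real.rpow_mul (abs_nonneg A), ← Real.rpow_mul (abs_nonneg z),
    show q * (1 - 2 / q) = q - 2 by field_simp, show q * (2 / q) = (2 : ℕ) by
      push_cast; field_simp, Real.rpow_natCast, sq_abs]
  have h1 : G ^ (1 - 2 / q) ≠ 0 := by positivity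
  have h2 : M ^ (2 / q) ≠ 0 := by positivity
  field_simp

lemma hc_twopoint_aux (q : ℝ) (hq : 2 ≤ q) (α β a z w : ℝ) (hα : 0 < α) (hβ : 0 < β)
    (hs : α + β = 1) (h0 : α * z + β * w = 0) (ha : a ≠ 0)
    (hM : 0 < α * |z| ^ q + β * |w| ^ q) :
    (α * |a + z| ^ q + β * |a + w| ^ q) ^ (2 / q) ≤
      a ^ 2 + (q - 1) * (α * |z| ^ q + β * |w| ^ q) ^ (2 / q) := by
  have hq0 : 0 < q := by linarith
  set M := α * |z| ^ q + β * |w| ^ q with hMdef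
  set G : ℝ → ℝ := fun t => α * |a + t * z| ^ q + β * |a + t * w| ^ q with hGdef
  set H : ℝ → ℝ := fun t => α * (|a + t * z| ^ (q - 2) * (a + t * z)) * z
    + β * (|a + t * w| ^ (q - 2) * (a + t * w)) * w with hHdef
  set J : ℝ → ℝ := fun t => α * (|a + t * z| ^ (q - 2) * z ^ 2)
    + β * (|a + t * w| ^ (q - 2) * w ^ 2) with hJdef
  have hGpos : ∀ t, 0 < G t := by
    intro t
    have hnn : 0 ≤ G t := by simp only [hGdef]; positivity
    refine lt_of_le_of_ne hnn fun h => ha ?_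
    by_cases hA : a + t * z = 0
    · by_cases hB : a + t * w = 0
      · have : a = α * (a + t * z) + β * (a + t * w) := by
          linear_combination (-a) * hs - t * h0
        rw [this, hA, hB]; simp
      · have : 0 < β * |a + t * w| ^ q := by
          have := abs_pos.2 hB
          positivity
        have h2 : 0 ≤ α * |a + t * z| ^ q := by positivity
        simp only [hGdef] at h
        linarith
    · have : 0 < α * |a + t * z| ^ q := by
        have := abs_pos.2 hA
        positivity
      have h2 : 0 ≤ β * |a + t * w| ^ q := by positivity
      simp only [hGdef] at h
      linarith
  have hlin : ∀ c t : ℝ, HasDerivAt (fun t : ℝ => a + t * c) c t := by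
    intro c t
    simpa using ((hasDerivAt_id t).mul_const c).const_add a
  have hGd : ∀ t, HasDerivAt G (q * H t) t := by
    intro t
    have e : ∀ c, HasDerivAt (fun t : ℝ => |a + t * c| ^ q)
        (q * |a + t * c| ^ (q - 2) * (a + t * c) * c) t := fun c =>
      HasDerivAt.comp (h₂ := fun x : ℝ => |x| ^ q) t
        (hasDerivAt_abs_rpow (a + t * c) (by linarith : 1 < q)) (hlin c t)
    have := ((e z).const_mul α).add ((e w).const_mul β)
    refine HasDerivAt.congr_deriv this ?_
    simp only [hHdef]; ring
  have hHd : ∀ t, HasDerivAt H ((q - 1) * J t) t := by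
    intro t
    have e : ∀ c, HasDerivAt (fun t : ℝ => |a + t * c| ^ (q - 2) * (a + t * c))
        ((q - 1) * |a + t * c| ^ (q - 2) * c) t := fun c =>
      HasDerivAt.comp (h₂ := fun x : ℝ => |x| ^ (q - 2) * x) t
        (hc_deriv q hq (a + t * c)) (hlin c t)
    have := (((e z).const_mul α).mul_const z).add (((e w).const_mul β).mul_const w)
    refine HasDerivAt.congr_deriv this ?_
    simp only [hJdef]; ring
  have hJ : ∀ t, J t ≤ G t ^ (1 - 2 / q) * M ^ (2 / q) := by
    intro t
    have y1 := mul_le_mul_of_nonneg_left (hc_young q hq (a + t * z) z (G t) M (hGpos t) hM) hα.le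
    have y2 := mul_le_mul_of_nonneg_left (hc_young q hq (a + t * w) w (G t) M (hGpos t) hM) hβ.le
    refine (add_le_add y1 y2).trans (le_of_eq ?_)
    have e1 : (α * |a + t * z| ^ q + β * |a + t * w| ^ q) / G t = 1 := div_self (hGpos t).ne'
    have e2 : (α * |z| ^ q + β * |w| ^ q) / M = 1 := div_self hM.ne'
    linear_combination (G t ^ (1 - 2 / q) * M ^ (2 / q)) * ((1 - 2 / q) * e1 + 2 / q * e2)
  set K := (q - 1) * M ^ (2 / q) with hK
  have hφ : ∀ t, HasDerivAt (fun t => G t ^ (2 / q)) (2 * (G t ^ (2 / q - 1) * H t)) t := by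
    intro t
    have := (hGd t).rpow_const (p := 2 / q) (Or.inl (hGpos t).ne')
    refine HasDerivAt.congr_deriv this ?_
    field_simp
  have hφ2 : ∀ t, HasDerivAt (fun t => G t ^ (2 / q - 1) * H t)
      (q * H t * (2 / q - 1) * G t ^ (2 / q - 1 - 1) * H t
        + G t ^ (2 / q - 1) * ((q - 1) * J t)) t := by
    intro t
    exact ((hGd t).rpow_const (p := 2 / q - 1) (Or.inl (hGpos t).ne')).mul (hHd t)
  have hD : ∀ t, HasDerivAt (fun t => K * t - G t ^ (2 / q - 1) * H t)
      (K - (q * H t * (2 / q - 1) * G t ^ (2 / q - 1 - 1) * H t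
        + G t ^ (2 / q - 1) * ((q - 1) * J t))) t := by
    intro t
    have := ((hasDerivAt_id t).const_mul K).sub (hφ2 t)
    exact HasDerivAt.congr_deriv this (by simp)
  have hmono : Monotone (fun t => K * t - G t ^ (2 / q - 1) * H t) := by
    refine monotone_of_deriv_nonneg (fun t => (hD t).differentiableAt) fun t => ?_
    rw [(hD t).deriv]
    have hg := hGpos t
    have a1 : G t ^ (2 / q - 1) * ((q - 1) * J t) ≤ K := by
      have : G t ^ (2 / q - 1) * ((q - 1) * J t) ≤
          G t ^ (2 / q - 1) * ((q - 1) * (G t ^ (1 - 2 / q) * M ^ (2 / q))) := by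
        have := hJ t
        have : 0 ≤ q - 1 := by linarith
        gcongr
      refine this.trans (le_of_eq ?_)
      have e : G t ^ (2 / q - 1) * G t ^ (1 - 2 / q) = 1 := by
        rw [← Real.rpow_add hg]; simp
      rw [hK]
      linear_combination ((q - 1) * M ^ (2 / q)) * e
    have a2 : 0 ≤ (q - 2) * G t ^ (2 / q - 1 - 1) * H t ^ 2 := by
      have : 0 ≤ q - 2 := by linarith
      positivity
    have a3 : q * H t * (2 / q - 1) * G t ^ (2 / q - 1 - 1) * H t
        = - ((q - 2) * G t ^ (2 / q - 1 - 1) * H t ^ 2) := by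
      have : q * (2 / q - 1) = 2 - q := by field_simp
      linear_combination (H t ^ 2 * G t ^ (2 / q - 1 - 1)) * this
    rw [a3]; linarith
  have hH0 : H 0 = 0 := by
    simp only [hHdef, zero_mul, add_zero]
    linear_combination (|a| ^ (q - 2) * a) * h0
  have hF : ∀ t, HasDerivAt (fun t => K * t ^ 2 - G t ^ (2 / q))
      (2 * (K * t - G t ^ (2 / q - 1) * H t)) t := by
    intro t
    have := (((hasDerivAt_id t).pow 2).const_mul K).sub (hφ t)
    refine HasDerivAt.congr_deriv this ?_
    simp; ring
  have hm2 : MonotoneOn (fun t => K * t ^ 2 - G t ^ (2 / q)) (Set.Ici 0) := by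
    refine monotoneOn_of_deriv_nonneg (convex_Ici 0)
      (fun t _ => (hF t).continuousAt.continuousWithinAt)
      (fun t _ => (hF t).differentiableAt.differentiableWithinAt) fun t ht => ?_
    rw [(hF t).deriv]
    rw [interior_Ici] at ht
    have := hmono (le_of_lt ht : (0:ℝ) ≤ t)
    simp only [hH0] at this
    linarith
  have hfin := hm2 (Set.mem_Ici.2 le_rfl) (Set.mem_Ici.2 zero_le_one) (zero_le_one)
  simp only [hGdef] at hfin
  simp only [zero_mul, add_zero, one_mul, one_pow, mul_one] at hfin
  have e0 : (α * |a| ^ q + β * |a| ^ q) ^ (2 / q) = a ^ 2 := by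
    rw [← add_mul, hs, one_mul, ← Real.rpow_mul (abs_nonneg a),
      show q * (2 / q) = (2 : ℕ) by push_cast; field_simp, Real.rpow_natCast, sq_abs]
  rw [e0] at hfin
  norm_num at hfin
  linarith

lemma hc_twopoint (q : ℝ) (hq : 2 ≤ q) (α β a z w : ℝ) (hα : 0 < α) (hβ : 0 < β)
    (hs : α + β = 1) (h0 : α * z + β * w = 0) :
    (α * |a + z| ^ q + β * |a + w| ^ q) ^ (2 / q) ≤
      a ^ 2 + (q - 1) * (α * |z| ^ q + β * |w| ^ q) ^ (2 / q) := by
  have hq0 : 0 < q := by linarith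
  by_cases ha : a = 0
  · subst ha
    simp only [zero_add]
    have : 0 ≤ (α * |z| ^ q + β * |w| ^ q) ^ (2 / q) := by positivity
    nlinarith
  · by_cases hz : z = 0
    · have hw : w = 0 := by
        subst hz
        simpa [hβ.ne'] using h0
      subst hz hw
      have e0 : (α * |a| ^ q + β * |a| ^ q) ^ (2 / q) = a ^ 2 := by
        rw [← add_mul, hs, one_mul, ← Real.rpow_mul (abs_nonneg a),
          show q * (2 / q) = (2 : ℕ) by push_cast; field_simp, Real.rpow_natCast, sq_abs]
      simp only [add_zero, e0]
      have : 0 ≤ (q - 1) * (α * |(0:ℝ)| ^ q + β * |(0:ℝ)| ^ q) ^ (2 / q) := by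
        have : 0 ≤ q - 1 := by linarith
        positivity
      linarith
    · have := abs_pos.2 hz
      exact hc_twopoint_aux q hq α β a z w hα hβ hs h0 ha (by positivity)

/-- one-bit character -/
noncomputable def chi1 (p : ℝ) (c : Bool) : ℝ :=
  ((if c then (1:ℝ) else -1) - (2 * p - 1)) / (2 * Real.sqrt (p * (1 - p)))

lemma chi1_mean (p : ℝ) : p * chi1 p true + (1 - p) * chi1 p false = 0 := by
  simp only [chi1, if_true]
  simp
  ring

lemma chi1_true_sq (p : ℝ) (hp : p ∈ Set.Ioo (0:ℝ) 1) : chi1 p true ^ 2 = (1 - p) / p := by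
  have h1 := hp.1
  have h2 : 0 < 1 - p := by linarith [hp.2]
  simp only [chi1, if_true]
  rw [div_pow, mul_pow, Real.sq_sqrt (by positivity)]
  field_simp; ring

lemma chi1_false_sq (p : ℝ) (hp : p ∈ Set.Ioo (0:ℝ) 1) : chi1 p false ^ 2 = p / (1 - p) := by
  have h1 := hp.1
  have h2 : 0 < 1 - p := by linarith [hp.2]
  simp only [chi1]
  rw [div_pow, mul_pow, Real.sq_sqrt (by positivity)]
  simp
  field_simp; ring

lemma chi1_mul (p : ℝ) (hp : p ∈ Set.Ioo (0:ℝ) 1) : chi1 p true * chi1 p false = -1 := by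
  have h1 := hp.1
  have h2 : 0 < 1 - p := by linarith [hp.2]
  have h3 : Real.sqrt (p * (1 - p)) ^ 2 = p * (1 - p) := Real.sq_sqrt (by positivity)
  have h4 : 0 < Real.sqrt (p * (1 - p)) := by positivity
  simp only [chi1]
  simp
  rw [div_mul_div_comm, div_eq_iff (by positivity)]
  linear_combination 4 * h3

lemma chi1_bound (p : ℝ) (hp : p ∈ Set.Ioo (0:ℝ) 1) (c : Bool) :
    chi1 p c ^ 2 ≤ (min p (1 - p))⁻¹ := by
  have h1 := hp.1
  have h2 : 0 < 1 - p := by linarith [hp.2]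
  cases c
  · rw [chi1_false_sq p hp]
    refine le_trans (b := (1 - p)⁻¹) ?_ (inv_anti₀ (lt_min h1 h2) (min_le_right _ _))
    rw [inv_eq_one_div]; gcongr; linarith
  · rw [chi1_true_sq p hp]
    refine le_trans (b := p⁻¹) ?_ (inv_anti₀ (lt_min h1 h2) (min_le_left _ _))
    rw [inv_eq_one_div]; gcongr; linarith

lemma chi1_abs_rpow (p : ℝ) (hp : p ∈ Set.Ioo (0:ℝ) 1) (q : ℝ) (hq : 2 ≤ q) (c : Bool) :
    |chi1 p c| ^ q ≤ ((min p (1 - p))⁻¹) ^ ((q - 2) / 2) * chi1 p c ^ 2 := by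
  have e : |chi1 p c| ^ q = (chi1 p c ^ 2) ^ ((q - 2) / 2) * chi1 p c ^ 2 := by
    rcases eq_or_ne (chi1 p c) 0 with h | h
    · rw [h]; simp [show q ≠ 0 by linarith]
    · have : 0 < chi1 p c ^ 2 := by positivity
      rw [← Real.rpow_add_one this.ne', ← sq_abs, ← Real.rpow_natCast,
        ← Real.rpow_mul (abs_nonneg _)]
      congr 1; push_cast; ring
  rw [e]
  have := chi1_bound p hp c
  gcongr

lemma chi1_norm (p : ℝ) (hp : p ∈ Set.Ioo (0:ℝ) 1) (q : ℝ) (hq : 2 ≤ q) :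
    p * |chi1 p true| ^ q + (1 - p) * |chi1 p false| ^ q ≤
      ((min p (1 - p))⁻¹) ^ ((q - 2) / 2) := by
  have h1 := hp.1
  have h2 : 0 < 1 - p := by linarith [hp.2]
  have a := mul_le_mul_of_nonneg_left (chi1_abs_rpow p hp q hq true) h1.le
  have b := mul_le_mul_of_nonneg_left (chi1_abs_rpow p hp q hq false) h2.le
  refine (add_le_add a b).trans (le_of_eq ?_)
  rw [chi1_true_sq p hp, chi1_false_sq p hp]
  field_simp; ring

lemma hc_bit (p : ℝ) (hp : p ∈ Set.Ioo (0:ℝ) 1) (q : ℝ) (hq : 2 ≤ q)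
    (γ : ℝ) (hγ : γ = (min p (1 - p)) ^ ((1:ℝ)/2 - 1/q) / Real.sqrt (q - 1)) (a b : ℝ) :
    p * |a + γ * chi1 p true * b| ^ q + (1 - p) * |a + γ * chi1 p false * b| ^ q ≤
      (a ^ 2 + b ^ 2) ^ (q / 2) := by
  have h1 := hp.1
  have h2 : 0 < 1 - p := by linarith [hp.2]
  have hq0 : 0 < q := by linarith
  have hl : 0 < min p (1 - p) := lt_min h1 h2
  have hm := chi1_mean p
  have key := hc_twopoint q hq p (1 - p) a (γ * chi1 p true * b) (γ * chi1 p false * b) h1 h2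
    (by ring) (by linear_combination (γ * b) * hm)
  have hγ0 : 0 ≤ γ := by rw [hγ]; positivity
  have hb : (q - 1) * (p * |γ * chi1 p true * b| ^ q + (1 - p) * |γ * chi1 p false * b| ^ q)
      ^ (2 / q) ≤ b ^ 2 := by
    have e : ∀ c : ℝ, |γ * c * b| ^ q = |γ * b| ^ q * |c| ^ q := by
      intro c
      rw [← Real.mul_rpow (abs_nonneg _) (abs_nonneg _), ← abs_mul]
      congr 2; ring
    have e2 : p * |γ * chi1 p true * b| ^ q + (1 - p) * |γ * chi1 p false * b| ^ q
        ≤ |γ * b| ^ q * ((min p (1 - p))⁻¹) ^ ((q - 2) / 2) := by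
      rw [e, e]
      have := mul_le_mul_of_nonneg_left (chi1_norm p hp q hq)
        (by positivity : 0 ≤ |γ * b| ^ q)
      linarith
    have e3 : (p * |γ * chi1 p true * b| ^ q + (1 - p) * |γ * chi1 p false * b| ^ q) ^ (2 / q)
        ≤ (|γ * b| ^ q * ((min p (1 - p))⁻¹) ^ ((q - 2) / 2)) ^ (2 / q) :=
      Real.rpow_le_rpow (by positivity) e2 (by positivity)
    have hq1 : 0 < q - 1 := by linarith
    refine (mul_le_mul_of_nonneg_left e3 hq1.le).trans (le_of_eq ?_)
    rw [Real.mul_rpow (by positivity) (by positivity), ← Real.rpow_mul (abs_nonneg _),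
      ← Real.rpow_mul (by positivity), show q * (2 / q) = (2 : ℕ) by push_cast; field_simp,
      Real.rpow_natCast, sq_abs, mul_pow, hγ, div_pow, Real.sq_sqrt hq1.le,
      ← Real.rpow_natCast (_ ^ _) 2, ← Real.rpow_mul hl.le, Real.inv_rpow hl.le]
    have : (1 / 2 - 1 / q) * ((2 : ℕ) : ℝ) = (q - 2) / 2 * (2 / q) := by
      push_cast; field_simp
    rw [this]
    have : min p (1 - p) ^ ((q - 2) / 2 * (2 / q)) ≠ 0 := by positivity
    field_simp
  have k2 := key.trans (add_le_add le_rfl hb)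
  have k3 := Real.rpow_le_rpow (by positivity) k2 (by positivity : 0 ≤ q / 2)
  rw [← Real.rpow_mul (by positivity), show 2 / q * (q / 2) = 1 by field_simp,
    Real.rpow_one] at k3
  exact k3

lemma pwt_nonneg (p : ℝ) (hp : p ∈ Set.Ioo (0:ℝ) 1) {n : ℕ} (x : Fin n → Bool) :
    0 ≤ pwt p x := by
  have h1 := hp.1
  have h2 : 0 < 1 - p := by linarith [hp.2]
  unfold pwt
  refine Finset.prod_nonneg fun i _ => ?_
  split_ifs <;> linarith

lemma pE_mono (p : ℝ) (hp : p ∈ Set.Ioo (0:ℝ) 1) {n : ℕ} {f g : (Fin n → Bool) → ℝ}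
    (h : ∀ x, f x ≤ g x) : pE p f ≤ pE p g :=
  Finset.sum_le_sum fun x _ => mul_le_mul_of_nonneg_left (h x) (pwt_nonneg p hp x)

lemma pE_nonneg (p : ℝ) (hp : p ∈ Set.Ioo (0:ℝ) 1) {n : ℕ} {f : (Fin n → Bool) → ℝ}
    (h : ∀ x, 0 ≤ f x) : 0 ≤ pE p f :=
  Finset.sum_nonneg fun x _ => mul_nonneg (pwt_nonneg p hp x) (h x)

lemma sum_cons {n : ℕ} (F : (Fin (n + 1) → Bool) → ℝ) :
    ∑ x, F x = ∑ x : Fin n → Bool, (F (Fin.cons true x) + F (Fin.cons false x)) := by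
  rw [← (Fin.consEquiv (fun _ => Bool)).sum_comp F, Fintype.sum_prod_type_right]
  refine Finset.sum_congr rfl fun x _ => ?_
  simp [Fin.consEquiv]

lemma pE_cons (p : ℝ) {n : ℕ} (F : (Fin (n + 1) → Bool) → ℝ) :
    pE p F = pE p fun x : Fin n → Bool =>
      p * F (Fin.cons true x) + (1 - p) * F (Fin.cons false x) := by
  unfold pE
  rw [sum_cons]
  refine Finset.sum_congr rfl fun x _ => ?_
  simp [pwt, Fin.prod_univ_succ]
  ring

lemma noiseOp_kernel (p δ : ℝ) {n : ℕ} (f : (Fin n → Bool) → ℝ) (x : Fin n → Bool) :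
    noiseOp p δ f x = pE p fun y => f y * ∏ i, (1 + δ * chi1 p (x i) * chi1 p (y i)) := by
  unfold noiseOp fhat pE
  simp only [Finset.prod_one_add, Finset.powerset_univ, Finset.mul_sum, Finset.sum_mul]
  rw [Finset.sum_comm]
  refine Finset.sum_congr rfl fun y _ => Finset.sum_congr rfl fun S _ => ?_
  rw [Finset.prod_mul_distrib, Finset.prod_mul_distrib, Finset.prod_const]
  unfold chi
  simp only [chi1]
  ring

lemma noiseOp_cons (p δ : ℝ) {n : ℕ} (f : (Fin (n + 1) → Bool) → ℝ) (c : Bool)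
    (x : Fin n → Bool) :
    noiseOp p δ f (Fin.cons c x) =
      noiseOp p δ (fun y => p * f (Fin.cons true y) + (1 - p) * f (Fin.cons false y)) x
      + δ * chi1 p c * noiseOp p δ (fun y => p * chi1 p true * f (Fin.cons true y)
        + (1 - p) * chi1 p false * f (Fin.cons false y)) x := by
  rw [noiseOp_kernel, noiseOp_kernel, noiseOp_kernel, pE_cons]
  unfold pE
  rw [Finset.mul_sum, ← Finset.sum_add_distrib]
  refine Finset.sum_congr rfl fun y _ => ?_
  simp only [Fin.prod_univ_succ, Fin.cons_zero, Fin.cons_succ]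
  ring

lemma pE_minkowski (p : ℝ) (hp : p ∈ Set.Ioo (0:ℝ) 1) {n : ℕ} (r : ℝ) (hr : 1 ≤ r)
    (f g : (Fin n → Bool) → ℝ) (hf : ∀ x, 0 ≤ f x) (hg : ∀ x, 0 ≤ g x) :
    (pE p fun x => (f x + g x) ^ r) ^ (1 / r) ≤
      (pE p fun x => f x ^ r) ^ (1 / r) + (pE p fun x => g x ^ r) ^ (1 / r) := by
  have h := Real.Lp_add_le_of_nonneg (s := Finset.univ) (p := r)
    (f := fun x : Fin n → Bool => pwt p x ^ (1 / r) * f x)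
    (g := fun x : Fin n → Bool => pwt p x ^ (1 / r) * g x) hr
    (fun x _ => mul_nonneg (Real.rpow_nonneg (pwt_nonneg p hp x) _) (hf x))
    (fun x _ => mul_nonneg (Real.rpow_nonneg (pwt_nonneg p hp x) _) (hg x))
  have e : ∀ (x : Fin n → Bool) (t : ℝ), 0 ≤ t → (pwt p x ^ (1 / r) * t) ^ r = pwt p x * t ^ r := by
    intro x t ht
    have hw := pwt_nonneg p hp x
    rw [Real.mul_rpow (Real.rpow_nonneg hw _) ht, ← Real.rpow_mul hw,
      show 1 / r * r = 1 by field_simp, Real.rpow_one]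
  simp only [← mul_add] at h
  simp only [e _ _ (hf _), e _ _ (hg _), e _ _ (add_nonneg (hf _) (hg _))] at h
  exact h

lemma hc_main (p : ℝ) (hp : p ∈ Set.Ioo (0:ℝ) 1) (q : ℝ) (hq : 2 ≤ q)
    (γ : ℝ) (hγ : γ = (min p (1 - p)) ^ ((1:ℝ)/2 - 1/q) / Real.sqrt (q - 1))
    (n : ℕ) : ∀ f : (Fin n → Bool) → ℝ,
    (pE p fun x => |noiseOp p γ f x| ^ q) ^ (2 / q) ≤ pE p fun x => f x ^ 2 := by
  have hq0 : 0 < q := by linarith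
  have esq : ∀ t : ℝ, (t ^ 2) ^ (q / 2) = |t| ^ q := by
    intro t
    rw [← sq_abs, ← Real.rpow_natCast, ← Real.rpow_mul (abs_nonneg _)]
    congr 1; push_cast; ring
  induction n with
  | zero =>
    intro f
    have e : ∀ x, noiseOp p γ f x = f x := by
      intro x
      rw [noiseOp_kernel]
      simp only [pE, pwt, Finset.univ_eq_empty, Finset.prod_empty, one_mul, mul_one,
        Finset.univ_unique, Finset.sum_singleton]
      exact congrArg f (Subsingleton.elim _ _)
    simp only [e]
    simp only [pE, pwt, Finset.univ_eq_empty, Finset.prod_empty, one_mul, Finset.univ_unique,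
      Finset.sum_singleton]
    rw [← Real.rpow_mul (abs_nonneg _), show q * (2 / q) = (2 : ℕ) by push_cast; field_simp,
      Real.rpow_natCast, sq_abs]
  | succ n ih =>
    intro f
    set u : (Fin n → Bool) → ℝ :=
      fun y => p * f (Fin.cons true y) + (1 - p) * f (Fin.cons false y) with hu
    set v : (Fin n → Bool) → ℝ := fun y => p * chi1 p true * f (Fin.cons true y)
        + (1 - p) * chi1 p false * f (Fin.cons false y) with hv
    have s1 : (pE p fun x => |noiseOp p γ f x| ^ q) ≤
        pE p fun x => (noiseOp p γ u x ^ 2 + noiseOp p γ v x ^ 2) ^ (q / 2) := by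
      rw [pE_cons]
      refine pE_mono p hp fun x => ?_
      rw [noiseOp_cons, noiseOp_cons]
      exact hc_bit p hp q hq γ hγ _ _
    have s2 := pE_minkowski p hp (q / 2) (by linarith) (fun x => noiseOp p γ u x ^ 2)
      (fun x => noiseOp p γ v x ^ 2) (fun x => sq_nonneg _) (fun x => sq_nonneg _)
    rw [show 1 / (q / 2) = 2 / q by field_simp] at s2
    simp only [esq] at s2
    have s0 : 0 ≤ pE p fun x => |noiseOp p γ f x| ^ q :=
      pE_nonneg p hp fun x => by positivity
    refine (Real.rpow_le_rpow s0 s1 (by positivity)).trans (s2.trans ?_)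
    refine (add_le_add (ih u) (ih v)).trans (le_of_eq ?_)
    rw [pE_cons]
    unfold pE
    rw [← Finset.sum_add_distrib]
    refine Finset.sum_congr rfl fun y _ => ?_
    rw [← mul_add]
    congr 1
    simp only [hu, hv]
    have h1 := hp.1
    have h2 : 0 < 1 - p := by linarith [hp.2]
    have c1 : p * chi1 p true ^ 2 = 1 - p := by
      rw [chi1_true_sq p hp]; field_simp
    have c2 : (1 - p) * chi1 p false ^ 2 = p := by
      rw [chi1_false_sq p hp]; field_simp
    have c3 := chi1_mul p hp
    linear_combination (p * f (Fin.cons true y) ^ 2) * c1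
      + ((1 - p) * f (Fin.cons false y) ^ 2) * c2
      + (2 * p * (1 - p) * f (Fin.cons true y) * f (Fin.cons false y)) * c3

/-- Hypercontractivity for the p-biased measure, smoothing parameter (i):
ρ(q) = λ^(1/2 - 1/q), γ = ρ(q)/√(q-1). -/
theorem stmt1 (p : ℝ) (hp : p ∈ Set.Ioo (0:ℝ) 1) (q : ℝ) (hq : 2 ≤ q)
    (γ : ℝ) (hγ : γ = (min p (1 - p)) ^ ((1:ℝ)/2 - 1/q) / Real.sqrt (q - 1))
    (n : ℕ) (f : (Fin n → Bool) → ℝ) :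
    pNorm p q (noiseOp p γ f) ≤ pNorm p 2 f := by
  have hq0 : 0 < q := by linarith
  have h := hc_main p hp q hq γ hγ n f
  have s0 : 0 ≤ pE p fun x => |noiseOp p γ f x| ^ q :=
    pE_nonneg p hp fun x => by positivity
  have h2 := Real.rpow_le_rpow (Real.rpow_nonneg s0 _) h (by norm_num : (0:ℝ) ≤ 1 / 2)
  rw [← Real.rpow_mul s0, show 2 / q * (1 / 2) = 1 / q by field_simp] at h2
  unfold pNorm
  have e : ∀ t : ℝ, |t| ^ (2:ℝ) = t ^ 2 := by
    intro t
    rw [Real.rpow_two, sq_abs]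
  simp only [e]
  exact h2
end

section
/- Let p ∈ (0,1) with p ≠ 1/2, λ = min(p, 1−p), let q ≥ 2 be real, put L = ln(λ/(1−λ)) (< 0), and set γ = √( sinh(−(1/q)·L) / sinh(−(1 − 1/q)·L) ). Then for every f : {−1,1}^n → ℝ, under the p-biased measure μ one has ‖T_γ f‖_q ≤ ‖f‖₂. -/
open Filter Function Real

lemma aux_sinh_scale (θ x : ℝ) (h0 : 0 ≤ θ) (h1 : θ ≤ 1) (hx : 0 ≤ x) :
    Real.sinh (θ * x) ≤ θ * Real.sinh x := by
  have hm : MonotoneOn (fun t => θ * Real.sinh t - Real.sinh (θ * t)) (Set.Ici 0) := by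
    have hd : ∀ t, HasDerivAt (fun t => θ * Real.sinh t - Real.sinh (θ * t))
        (θ * Real.cosh t - Real.cosh (θ * t) * (θ * 1)) t := by
      intro t
      exact ((Real.hasDerivAt_sinh t).const_mul θ).sub
        (((hasDerivAt_id t).const_mul θ).sinh)
    apply monotoneOn_of_deriv_nonneg (convex_Ici 0)
    · exact fun t _ => (hd t).continuousAt.continuousWithinAt
    · exact fun t _ => (hd t).differentiableAt.differentiableWithinAt
    · intro t ht
      rw [interior_Ici, Set.mem_Ioi] at ht
      rw [(hd t).deriv]
      have : Real.cosh (θ * t) ≤ Real.cosh t := by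
        rw [Real.cosh_le_cosh, abs_of_nonneg (by positivity), abs_of_pos ht]
        nlinarith
      nlinarith
  have := hm (Set.mem_Ici.2 le_rfl) (Set.mem_Ici.2 hx) hx
  simp at this
  linarith

lemma aux_key (k v : ℝ) (hk1 : 1 ≤ k) (hk2 : k ≤ 2) (hv : 0 < v) :
    0 ≤ (2 * Real.cosh v ^ 2 + 2 * (k - 1) * Real.sinh v ^ 2) * Real.sinh (k * v)
      - 2 * k * Real.sinh v * Real.cosh v * Real.cosh (k * v) := by
  have h := aux_sinh_scale ((2 - k) / k) (k * v) (by apply div_nonneg <;> linarith)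
    (by rw [div_le_one (by linarith)]; linarith) (by positivity)
  have e : (2 - k) / k * (k * v) = 2 * v - k * v := by field_simp
  rw [e, Real.sinh_sub, Real.sinh_two_mul, Real.cosh_two_mul, div_mul_eq_mul_div,
    le_div_iff₀ (by linarith)] at h
  have hc := Real.cosh_sq v
  have : (2 * Real.cosh v ^ 2 + 2 * (k - 1) * Real.sinh v ^ 2) =
    k * (Real.cosh v ^ 2 + Real.sinh v ^ 2) + (2 - k) := by rw [hc]; ring
  rw [this]
  nlinarith

noncomputable def auxPsi (k v : ℝ) : ℝ :=
  Real.sinh v * (2 * Real.cosh v) ^ (k - 1) / Real.sinh (k * v)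

lemma aux_two_cosh_pos (v : ℝ) : 0 < 2 * Real.cosh v := by
  have := Real.cosh_pos v
  linarith

lemma aux_hasDeriv_cosh_rpow (a v : ℝ) :
    HasDerivAt (fun v => (2 * Real.cosh v) ^ a)
      (2 * Real.sinh v * a * (2 * Real.cosh v) ^ (a - 1)) v :=
  ((Real.hasDerivAt_cosh v).const_mul 2).rpow_const (Or.inl (aux_two_cosh_pos v).ne')

lemma auxPsi_mono (k : ℝ) (hk1 : 1 ≤ k) (hk2 : k ≤ 2) :
    MonotoneOn (auxPsi k) (Set.Ioi 0) := by
  have hs : ∀ v : ℝ, 0 < v → 0 < Real.sinh (k * v) := fun v hv =>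
    Real.sinh_pos_iff.2 (by positivity)
  have hd : ∀ v : ℝ, 0 < v → HasDerivAt (auxPsi k)
      (((Real.cosh v * (2 * Real.cosh v) ^ (k - 1) +
        Real.sinh v * (2 * Real.sinh v * (k - 1) * (2 * Real.cosh v) ^ (k - 1 - 1)))
          * Real.sinh (k * v) - Real.sinh v * (2 * Real.cosh v) ^ (k - 1) *
          (Real.cosh (k * v) * (k * 1))) / Real.sinh (k * v) ^ 2) v := by
    intro v hv
    exact ((Real.hasDerivAt_sinh v).mul (aux_hasDeriv_cosh_rpow (k - 1) v)).div
      (((hasDerivAt_id v).const_mul k).sinh) (hs v hv).ne'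
  apply monotoneOn_of_deriv_nonneg (convex_Ioi 0)
  · exact fun t ht => (hd t ht).continuousAt.continuousWithinAt
  · rw [interior_Ioi]
    exact fun t ht => (hd t ht).differentiableAt.differentiableWithinAt
  · rw [interior_Ioi]
    intro v hv
    rw [(hd v hv).deriv]
    apply div_nonneg _ (sq_nonneg _)
    have hp := aux_two_cosh_pos v
    have e : (2 * Real.cosh v) ^ (k - 1) =
        (2 * Real.cosh v) ^ (k - 1 - 1) * (2 * Real.cosh v) := by
      rw [Real.rpow_sub_one hp.ne' (k - 1)]; field_simp
    rw [e]
    have hk := mul_nonneg (Real.rpow_nonneg hp.le (k - 1 - 1)) (aux_key k v hk1 hk2 hv)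
    refine hk.trans_eq ?_
    ring

lemma aux_F_pos (k v w : ℝ) (hk1 : 1 ≤ k) (hk2 : k ≤ 2) (hv : 0 ≤ v) (hw : 0 < w) :
    (2 * Real.cosh w) ^ k - 2 * auxPsi k w * Real.cosh (k * w) ≤
      (2 * Real.cosh v) ^ k - 2 * auxPsi k w * Real.cosh (k * v) := by
  have hs : ∀ v : ℝ, 0 < v → 0 < Real.sinh (k * v) := fun v hv =>
    Real.sinh_pos_iff.2 (by positivity)
  set D := 2 * auxPsi k w with hD
  have hd : ∀ v, HasDerivAt (fun v => (2 * Real.cosh v) ^ k - D * Real.cosh (k * v))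
      (2 * Real.sinh v * k * (2 * Real.cosh v) ^ (k - 1) -
        D * (Real.sinh (k * v) * (k * 1))) v := fun v =>
    (aux_hasDeriv_cosh_rpow k v).sub ((((hasDerivAt_id v).const_mul k).cosh).const_mul D)
  have hd' : ∀ v, 0 < v → deriv (fun v => (2 * Real.cosh v) ^ k - D * Real.cosh (k * v)) v
      = 2 * k * Real.sinh (k * v) * (auxPsi k v - auxPsi k w) := by
    intro v hv
    rw [(hd v).deriv, hD]
    have := (hs v hv).ne'
    unfold auxPsi
    field_simp
  rcases le_total v w with h | h
  · have : AntitoneOn (fun v => (2 * Real.cosh v) ^ k - D * Real.cosh (k * v))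
        (Set.Icc 0 w) := by
      apply antitoneOn_of_deriv_nonpos (convex_Icc 0 w)
      · exact fun t _ => (hd t).continuousAt.continuousWithinAt
      · exact fun t _ => (hd t).differentiableAt.differentiableWithinAt
      · rw [interior_Icc]
        intro t ht
        rw [hd' t ht.1]
        have h1 := hs t ht.1
        have h2 := auxPsi_mono k hk1 hk2 ht.1 hw ht.2.le
        apply mul_nonpos_of_nonneg_of_nonpos (by positivity) (by linarith)
    exact this ⟨hv, h⟩ ⟨hw.le, le_rfl⟩ h
  · have : MonotoneOn (fun v => (2 * Real.cosh v) ^ k - D * Real.cosh (k * v))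
        (Set.Ici w) := by
      apply monotoneOn_of_deriv_nonneg (convex_Ici w)
      · exact fun t _ => (hd t).continuousAt.continuousWithinAt
      · exact fun t _ => (hd t).differentiableAt.differentiableWithinAt
      · rw [interior_Ici]
        intro t ht
        have ht0 : 0 < t := hw.trans ht
        rw [hd' t ht0]
        have h1 := hs t ht0
        have h2 := auxPsi_mono k hk1 hk2 hw ht0 (le_of_lt ht)
        apply mul_nonneg (by positivity) (by linarith)
    exact this (Set.mem_Ici.2 le_rfl) (Set.mem_Ici.2 h) h

lemma auxPsi_neg (k w : ℝ) : auxPsi k (-w) = auxPsi k w := by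
  unfold auxPsi
  rw [Real.sinh_neg, Real.cosh_neg, mul_neg, Real.sinh_neg, neg_mul, neg_div_neg_eq]

lemma aux_F (k v w : ℝ) (hk1 : 1 ≤ k) (hk2 : k ≤ 2) (hw : w ≠ 0) :
    (2 * Real.cosh w) ^ k - 2 * auxPsi k w * Real.cosh (k * w) ≤
      (2 * Real.cosh v) ^ k - 2 * auxPsi k w * Real.cosh (k * v) := by
  have h := aux_F_pos k |v| |w| hk1 hk2 (abs_nonneg v) (abs_pos.2 hw)
  have e1 : auxPsi k |w| = auxPsi k w := by
    rcases abs_choice w with h | h <;> rw [h]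
    exact auxPsi_neg k w
  have e2 : ∀ u : ℝ, Real.cosh (k * |u|) = Real.cosh (k * u) := by
    intro u
    rcases abs_choice u with h | h <;> rw [h]
    rw [mul_neg, Real.cosh_neg]
  rwa [e1, e2, e2, Real.cosh_abs, Real.cosh_abs] at h

/-- hyperbolic form of the two-point inequality -/
lemma aux_hyp (k v w g : ℝ) (hk1 : 1 ≤ k) (hk2 : k ≤ 2) (hw : w ≠ 0)
    (hg : g = Real.sinh ((2 - k) * w) / Real.sinh (k * w)) :
    (2 * Real.cosh w) ^ (k - 2) *
      (2 * Real.cosh (k * v + (2 - k) * w) + 2 * g * Real.cosh (k * v - k * w) + 2 - 2 * g)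
      ≤ (2 * Real.cosh v) ^ k := by
  have h := aux_F k v w hk1 hk2 hw
  have hs : Real.sinh (k * w) ≠ 0 := by
    rw [Ne, Real.sinh_eq_zero]
    exact mul_ne_zero (by linarith) hw
  have hp := aux_two_cosh_pos w
  have hg' : g * Real.sinh (k * w) = Real.sinh ((2 - k) * w) := by
    rw [hg]; field_simp
  set P := (2 * Real.cosh w) ^ (k - 2) with hP
  have e1 : (2 * Real.cosh w) ^ (k - 1) = P * (2 * Real.cosh w) := by
    rw [hP, ← Real.rpow_add_one hp.ne']; congr 1; ring
  have e2 : (2 * Real.cosh w) ^ k = P * (2 * Real.cosh w) ^ 2 := by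
    rw [hP, ← Real.rpow_add_natCast hp.ne']; congr 1; push_cast; ring
  have eA : (Real.cosh ((2 - k) * w) + g * Real.cosh (k * w)) * Real.sinh (k * w)
      = 2 * Real.sinh w * Real.cosh w := by
    have : Real.sinh (2 * w) = Real.sinh (k * w + (2 - k) * w) := by congr 1; ring
    rw [Real.sinh_two_mul, Real.sinh_add] at this
    rw [this, ← hg']; ring
  set A := Real.cosh ((2 - k) * w) + g * Real.cosh (k * w) with hA
  have ePsi : auxPsi k w = P * A := by
    unfold auxPsi
    rw [e1, div_eq_iff hs, mul_assoc P, eA]; ring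
  have eG : ∀ u, Real.cosh (k * u + (2 - k) * w) + g * Real.cosh (k * u - k * w)
      = A * Real.cosh (k * u) := by
    intro u
    rw [Real.cosh_add, Real.cosh_sub, ← hg', hA]; ring
  have e3 : Real.cosh (k * w + (2 - k) * w) + g * Real.cosh (k * w - k * w)
      = 2 * Real.cosh w ^ 2 - 1 + g := by
    have : k * w + (2 - k) * w = 2 * w := by ring
    rw [this, Real.cosh_two_mul, sub_self, Real.cosh_zero, Real.sinh_sq]; ring
  have h4 := eG v
  have h5 := eG w
  rw [e3] at h5
  rw [ePsi, e2] at h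
  have h6 : P * A * Real.cosh (k * w) = P * (2 * Real.cosh w ^ 2 - 1 + g) := by
    rw [h5]; ring
  have h7 : P * (2 * Real.cosh (k * v + (2 - k) * w) + 2 * g * Real.cosh (k * v - k * w)
      + 2 - 2 * g) = 2 * (P * A * Real.cosh (k * v)) + P * (2 - 2 * g) := by
    have : P * A * Real.cosh (k * v) = P * (A * Real.cosh (k * v)) := by ring
    rw [this, ← h4]; ring
  rw [h7]
  have e4 : 2 * (P * A) * Real.cosh (k * w) = 2 * (P * (2 * Real.cosh w ^ 2 - 1 + g)) := by
    rw [← h6]; ring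
  rw [e4] at h
  nlinarith

lemma aux_two_point_pos (p q g : ℝ) (hp0 : 0 < p) (hp1 : p < 1) (hp' : p ≠ 1/2) (hq : 2 ≤ q)
    (hg : g = Real.sinh ((1/q) * Real.log (p / (1 - p))) /
      Real.sinh ((1 - 1/q) * Real.log (p / (1 - p))))
    (x y : ℝ) (hx : 0 < x) (hy : 0 < y) :
    (p * x + (1 - p) * y) ^ 2 + g * (p * (1 - p)) * (x - y) ^ 2 ≤
      (p * x ^ (1 / (1 - 1/q)) + (1 - p) * y ^ (1 / (1 - 1/q))) ^ (2 * (1 - 1/q)) := by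
  have hb : 0 < 1 - p := by linarith
  have hq2 : 1 / q ≤ 1 / 2 := one_div_le_one_div_of_le (by norm_num) hq
  have hq0 : 0 < 1 / q := by positivity
  set s := 1 - 1 / q with hs
  have hs0 : 0 < s := by linarith
  set w := Real.log (p / (1 - p)) / 2 with hw
  have hw0 : w ≠ 0 := by
    rw [hw]
    apply div_ne_zero _ two_ne_zero
    apply Real.log_ne_zero_of_pos_of_ne_one (by positivity)
    rw [Ne, div_eq_one_iff_eq hb.ne']
    intro h; apply hp'; linarith
  set τ := Real.log (x / y) / (2 * s) with hτ
  set m := Real.sqrt (x * y) with hm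
  set c := 1 / (2 * Real.cosh w) with hc
  have hC := aux_two_cosh_pos w
  have hc0 : 0 < c := by positivity
  have hm0 : 0 < m := by positivity
  have exp2w : Real.exp w ^ 2 = p / (1 - p) := by
    rw [← Real.exp_nat_mul, hw]
    push_cast
    rw [mul_div_cancel₀ _ two_ne_zero, Real.exp_log (by positivity)]
  have ecosh : 2 * Real.cosh w = Real.exp w + Real.exp (-w) := by
    rw [Real.cosh_eq]; ring
  have ep : p = c * Real.exp w := by
    rw [hc, ecosh, Real.exp_neg]
    have := Real.exp_pos w
    field_simp
    rw [exp2w]; field_simp; ring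
  have eb : 1 - p = c * Real.exp (-w) := by
    have : c * (2 * Real.cosh w) = 1 := by rw [hc]; field_simp
    rw [ecosh] at this
    nlinarith
  have hxm : x = m * Real.exp (s * τ) := by
    have : s * τ = Real.log x / 2 - Real.log y / 2 := by
      rw [hτ, Real.log_div hx.ne' hy.ne']; field_simp
    rw [this, hm, ← Real.exp_log (show 0 < √(x*y) by positivity), Real.log_sqrt (by positivity),
      Real.log_mul hx.ne' hy.ne', ← Real.exp_add]
    nth_rw 1 [← Real.exp_log hx]
    congr 1; ring
  have hym : y = m * Real.exp (-(s * τ)) := by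
    have : s * τ = Real.log x / 2 - Real.log y / 2 := by
      rw [hτ, Real.log_div hx.ne' hy.ne']; field_simp
    rw [this, hm, ← Real.exp_log (show 0 < √(x*y) by positivity), Real.log_sqrt (by positivity),
      Real.log_mul hx.ne' hy.ne', ← Real.exp_add]
    nth_rw 1 [← Real.exp_log hy]
    congr 1; ring
  clear_value m
  have hgk : g = Real.sinh ((2 - 2 * s) * w) / Real.sinh (2 * s * w) := by
    rw [hg]; congr 2 <;> rw [hw, hs] <;> ring
  have key := aux_hyp (2 * s) (τ + w) w g (by linarith) (by linarith) hw0 hgk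
  have rhs : (p * x ^ (1 / s) + (1 - p) * y ^ (1 / s)) ^ (2 * s) =
      m ^ 2 * c ^ (2 * s) * (2 * Real.cosh (τ + w)) ^ (2 * s) := by
    have h1 : x ^ (1 / s) = m ^ (1 / s) * Real.exp τ := by
      rw [hxm, Real.mul_rpow hm0.le (Real.exp_pos _).le, ← Real.exp_mul]
      congr 2; field_simp
    have h2 : y ^ (1 / s) = m ^ (1 / s) * Real.exp (-τ) := by
      rw [hym, Real.mul_rpow hm0.le (Real.exp_pos _).le, ← Real.exp_mul]
      congr 2; field_simp
    have h3 : p * x ^ (1 / s) + (1 - p) * y ^ (1 / s) =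
        m ^ (1 / s) * (c * (2 * Real.cosh (τ + w))) := by
      rw [h1, h2, eb, Real.cosh_eq, neg_add, Real.exp_add, Real.exp_add]
      nth_rw 1 [ep]; ring
    have hCt := aux_two_cosh_pos (τ + w)
    rw [h3, Real.mul_rpow (by positivity) (by positivity), Real.mul_rpow hc0.le hCt.le,
      ← Real.rpow_mul hm0.le]
    have : 1 / s * (2 * s) = (2 : ℕ) := by field_simp; norm_num
    rw [this, Real.rpow_natCast]; ring
  have lhs : (p * x + (1 - p) * y) ^ 2 + g * (p * (1 - p)) * (x - y) ^ 2 =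
      m ^ 2 * c ^ 2 * (2 * Real.cosh (2 * s * (τ + w) + (2 - 2 * s) * w) +
        2 * g * Real.cosh (2 * s * (τ + w) - 2 * s * w) + 2 - 2 * g) := by
    have a1 : 2 * s * (τ + w) + (2 - 2 * s) * w = 2 * (s * τ + w) := by ring
    have a2 : 2 * s * (τ + w) - 2 * s * w = 2 * (s * τ) := by ring
    have a3 : p * x + (1 - p) * y = m * c * (2 * Real.cosh (s * τ + w)) := by
      rw [eb, hxm, hym, Real.cosh_eq, neg_add, Real.exp_add, Real.exp_add]
      nth_rw 1 [ep]; ring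
    have a4 : x - y = m * (2 * Real.sinh (s * τ)) := by
      rw [hxm, hym, Real.sinh_eq]; ring
    have a5 : p * (1 - p) = c ^ 2 := by
      rw [eb]; nth_rw 1 [ep]
      have : Real.exp w * Real.exp (-w) = 1 := by rw [← Real.exp_add]; simp
      linear_combination c ^ 2 * this
    rw [a1, a2, a3, a4, a5, Real.cosh_two_mul, Real.cosh_two_mul, Real.sinh_sq, Real.cosh_sq (s * τ)]
    ring
  rw [lhs, rhs]
  have hcs : c ^ (2 * s) * (2 * Real.cosh w) ^ (2 * s - 2) = c ^ 2 := by
    have : 2 * Real.cosh w = c⁻¹ := by rw [hc]; simp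
    rw [this, Real.inv_rpow hc0.le, ← Real.rpow_neg hc0.le, ← Real.rpow_add hc0]
    have : 2 * s + -(2 * s - 2) = (2 : ℕ) := by push_cast; ring
    rw [this, Real.rpow_natCast]
  rw [← hcs]
  have := mul_le_mul_of_nonneg_left key (show 0 ≤ m ^ 2 * c ^ (2 * s) by positivity)
  refine le_trans (le_of_eq ?_) this
  ring

lemma aux_two_point (p q g : ℝ) (hp0 : 0 < p) (hp1 : p < 1) (hp' : p ≠ 1/2) (hq : 2 ≤ q)
    (hg : g = Real.sinh ((1/q) * Real.log (p / (1 - p))) /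
      Real.sinh ((1 - 1/q) * Real.log (p / (1 - p))))
    (x y : ℝ) (hx : 0 ≤ x) (hy : 0 ≤ y) :
    (p * x + (1 - p) * y) ^ 2 + g * (p * (1 - p)) * (x - y) ^ 2 ≤
      (p * x ^ (1 / (1 - 1/q)) + (1 - p) * y ^ (1 / (1 - 1/q))) ^ (2 * (1 - 1/q)) := by
  have hq2 : 1 / q ≤ 1 / 2 := one_div_le_one_div_of_le (by norm_num) hq
  have hs0 : 0 < 1 - 1 / q := by linarith
  have hr0 : 0 ≤ 1 / (1 - 1 / q) := by positivity
  have hs2 : 0 ≤ 2 * (1 - 1 / q) := by positivity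
  set s := 1 - 1 / q with hs
  have c1 : Continuous fun e : ℝ => (p * (x + e) + (1 - p) * (y + e)) ^ 2 +
      g * (p * (1 - p)) * ((x + e) - (y + e)) ^ 2 := by fun_prop
  have c2 : Continuous fun e : ℝ =>
      (p * (x + e) ^ (1 / s) + (1 - p) * (y + e) ^ (1 / s)) ^ (2 * s) := by
    apply Continuous.rpow_const _ (fun _ => Or.inr hs2)
    apply Continuous.add <;> apply Continuous.mul continuous_const <;>
      exact Continuous.rpow_const (by fun_prop) (fun _ => Or.inr hr0)
  have t1 := (c1.tendsto 0).mono_left (nhdsWithin_le_nhds (s := Set.Ioi 0))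
  have t2 := (c2.tendsto 0).mono_left (nhdsWithin_le_nhds (s := Set.Ioi 0))
  have := le_of_tendsto_of_tendsto t1 t2 (by
    filter_upwards [self_mem_nhdsWithin] with e he
    have he : 0 < e := he
    exact aux_two_point_pos p q g hp0 hp1 hp' hq hg (x + e) (y + e) (by linarith) (by linarith))
  simpa using this

lemma aux_sum_finset_succ {n : ℕ} (F : Finset (Fin (n + 1)) → ℝ) :
    ∑ T, F T = ∑ S : Finset (Fin n), F (S.image Fin.succ) +
      ∑ S : Finset (Fin n), F (insert 0 (S.image Fin.succ)) := by
  have h0 : (0 : Fin (n + 1)) ∉ (Finset.univ : Finset (Fin n)).image Fin.succ := by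
    simp [Fin.succ_ne_zero]
  have hu : (Finset.univ : Finset (Fin (n + 1))) =
      insert 0 ((Finset.univ : Finset (Fin n)).image Fin.succ) := by
    ext i; cases i using Fin.cases <;> simp
  have hinj : Set.InjOn (fun S : Finset (Fin n) => S.image Fin.succ)
      ((Finset.univ : Finset (Fin n)).powerset : Set (Finset (Fin n))) :=
    (Finset.image_injective (Fin.succ_injective n)).injOn
  rw [← Finset.powerset_univ, hu, Finset.sum_powerset_insert h0, Finset.powerset_image,
    Finset.sum_image hinj, Finset.sum_image hinj, Finset.powerset_univ]

lemma aux_pE_succ (p : ℝ) {n : ℕ} (f : (Fin (n + 1) → Bool) → ℝ) :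
    pE p f = p * pE p (fun x => f (Fin.cons true x)) +
      (1 - p) * pE p (fun x => f (Fin.cons false x)) := by
  unfold pE
  rw [← (Fin.consEquiv (fun _ => Bool)).sum_comp, Fintype.sum_prod_type, Fintype.sum_bool,
    Finset.mul_sum, Finset.mul_sum]
  congr 1 <;> refine Finset.sum_congr rfl fun x _ => ?_ <;>
    simp [pwt, Fin.consEquiv, Fin.prod_univ_succ, mul_assoc]

lemma aux_chi_succ (p : ℝ) {n : ℕ} (b : Bool) (x : Fin n → Bool) (S : Finset (Fin n)) :
    chi p (S.image Fin.succ) (Fin.cons b x : Fin (n + 1) → Bool) = chi p S x := by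
  unfold chi
  rw [Finset.prod_image (fun _ _ _ _ h => Fin.succ_injective n h)]
  simp

lemma aux_chi_insert (p : ℝ) {n : ℕ} (b : Bool) (x : Fin n → Bool) (S : Finset (Fin n)) :
    chi p (insert 0 (S.image Fin.succ)) (Fin.cons b x : Fin (n + 1) → Bool) =
      ((if b then (1:ℝ) else -1) - (2 * p - 1)) / (2 * Real.sqrt (p * (1 - p))) * chi p S x := by
  rw [← aux_chi_succ p b x S]
  unfold chi
  rw [Finset.prod_insert (by simp [Fin.succ_ne_zero])]
  simp

lemma aux_pE_const_mul (p c : ℝ) {n : ℕ} (f : (Fin n → Bool) → ℝ) :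
    pE p (fun x => c * f x) = c * pE p f := by
  unfold pE
  rw [Finset.mul_sum]
  exact Finset.sum_congr rfl fun x _ => by ring

lemma aux_fhat_succ (p : ℝ) {n : ℕ} (f : (Fin (n + 1) → Bool) → ℝ) (S : Finset (Fin n)) :
    fhat p f (S.image Fin.succ) = p * fhat p (fun x => f (Fin.cons true x)) S +
      (1 - p) * fhat p (fun x => f (Fin.cons false x)) S := by
  unfold fhat
  rw [aux_pE_succ]
  simp only [aux_chi_succ]

lemma aux_fhat_insert (p : ℝ) (hp0 : 0 < p) (hp1 : p < 1) {n : ℕ}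
    (f : (Fin (n + 1) → Bool) → ℝ) (S : Finset (Fin n)) :
    fhat p f (insert 0 (S.image Fin.succ)) = Real.sqrt (p * (1 - p)) *
      (fhat p (fun x => f (Fin.cons true x)) S - fhat p (fun x => f (Fin.cons false x)) S) := by
  unfold fhat
  rw [aux_pE_succ]
  simp only [aux_chi_insert, mul_left_comm (f _), aux_pE_const_mul]
  have hpos : 0 < p * (1 - p) := mul_pos hp0 (by linarith)
  have hs : 0 < Real.sqrt (p * (1 - p)) := Real.sqrt_pos.2 hpos
  have hsq := Real.sq_sqrt hpos.le
  field_simp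
  rw [hsq]
  simp
  ring

noncomputable def auxQ (p d : ℝ) {n : ℕ} (f : (Fin n → Bool) → ℝ) : ℝ :=
  ∑ S : Finset (Fin n), d ^ S.card * fhat p f S ^ 2

lemma auxQ_nonneg (p d : ℝ) (hd : 0 ≤ d) {n : ℕ} (f : (Fin n → Bool) → ℝ) :
    0 ≤ auxQ p d f := Finset.sum_nonneg fun S _ => by positivity

lemma auxQ_succ (p d : ℝ) (hp0 : 0 < p) (hp1 : p < 1) {n : ℕ}
    (f : (Fin (n + 1) → Bool) → ℝ) :
    auxQ p d f = p * (p + d * (1 - p)) * auxQ p d (fun x => f (Fin.cons true x)) +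
      (1 - p) * ((1 - p) + d * p) * auxQ p d (fun x => f (Fin.cons false x)) +
      2 * (p * (1 - p) * (1 - d)) * ∑ S : Finset (Fin n), d ^ S.card *
        (fhat p (fun x => f (Fin.cons true x)) S * fhat p (fun x => f (Fin.cons false x)) S) := by
  have hpos : 0 < p * (1 - p) := mul_pos hp0 (by linarith)
  have hsq := Real.sq_sqrt hpos.le
  have h0 : ∀ S : Finset (Fin n), (0 : Fin (n + 1)) ∉ S.image Fin.succ := by
    simp [Fin.succ_ne_zero]
  unfold auxQ
  rw [aux_sum_finset_succ]
  simp only [Finset.card_insert_of_notMem (h0 _),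
    Finset.card_image_of_injective _ (Fin.succ_injective n), aux_fhat_succ,
    aux_fhat_insert p hp0 hp1, mul_pow, hsq]
  rw [Finset.mul_sum, Finset.mul_sum, Finset.mul_sum, ← Finset.sum_add_distrib,
    ← Finset.sum_add_distrib, ← Finset.sum_add_distrib]
  refine Finset.sum_congr rfl fun S _ => ?_
  ring

lemma auxQ_zero (p d : ℝ) (f : (Fin 0 → Bool) → ℝ) : auxQ p d f = pE p (fun x => f x ^ 2) := by
  have hd : (default : Finset (Fin 0)) = ∅ := Subsingleton.elim _ _
  simp [auxQ, fhat, pE, pwt, chi, hd]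

lemma aux_parseval (p : ℝ) (hp0 : 0 < p) (hp1 : p < 1) {n : ℕ}
    (f : (Fin n → Bool) → ℝ) : auxQ p 1 f = pE p (fun x => f x ^ 2) := by
  induction n with
  | zero => exact auxQ_zero p 1 f
  | succ n ih =>
    rw [auxQ_succ p 1 hp0 hp1, ih, ih, aux_pE_succ p (fun x => f x ^ 2)]
    ring

lemma aux_cs {ι : Type*} [Fintype ι] (w a b : ι → ℝ) (hw : ∀ i, 0 ≤ w i) :
    ∑ i, w i * (a i * b i) ≤ √(∑ i, w i * a i ^ 2) * √(∑ i, w i * b i ^ 2) := by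
  have h := Real.sum_mul_le_sqrt_mul_sqrt Finset.univ (fun i => √(w i) * a i)
    (fun i => √(w i) * b i)
  simp only [mul_pow, Real.sq_sqrt (hw _)] at h
  refine le_trans (le_of_eq (Finset.sum_congr rfl fun i _ => ?_)) h
  have := Real.mul_self_sqrt (hw i)
  linear_combination (-(a i * b i)) * this

lemma aux_pE_nonneg (p : ℝ) (hp0 : 0 < p) (hp1 : p < 1) {n : ℕ}
    (f : (Fin n → Bool) → ℝ) (hf : ∀ x, 0 ≤ f x) : 0 ≤ pE p f := by
  unfold pE pwt
  refine Finset.sum_nonneg fun x _ => mul_nonneg (Finset.prod_nonneg fun i _ => ?_) (hf x)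
  split_ifs <;> linarith

lemma aux_dual (p q g : ℝ) (hp0 : 0 < p) (hp1 : p < 1) (hp' : p ≠ 1/2) (hq : 2 ≤ q)
    (hg : g = Real.sinh ((1/q) * Real.log (p / (1 - p))) /
      Real.sinh ((1 - 1/q) * Real.log (p / (1 - p)))) (hg0 : 0 ≤ g) (hg1 : g ≤ 1)
    {n : ℕ} (f : (Fin n → Bool) → ℝ) :
    auxQ p g f ≤ (pE p (fun x => |f x| ^ (1 / (1 - 1/q)))) ^ (2 * (1 - 1/q)) := by
  have hq2 : 1 / q ≤ 1 / 2 := one_div_le_one_div_of_le (by norm_num) hq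
  have hs0 : 0 < 1 - 1 / q := by linarith
  have hb : 0 < 1 - p := by linarith
  induction n with
  | zero =>
    rw [auxQ_zero]
    simp only [pE, pwt, Finset.univ_unique, Finset.sum_singleton, Finset.univ_eq_empty,
      Finset.prod_empty, one_mul]
    rw [← Real.rpow_mul (abs_nonneg _)]
    have : 1 / (1 - 1 / q) * (2 * (1 - 1 / q)) = (2 : ℕ) := by
      generalize 1 - 1 / q = s at *
      field_simp; norm_num
    rw [this, Real.rpow_natCast, sq_abs]
  | succ n ih =>
    have tp := aux_two_point p q g hp0 hp1 hp' hq hg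
    set s := 1 - 1 / q with hs
    set f1 := fun x : Fin n → Bool => f (Fin.cons true x) with hf1
    set f0 := fun x : Fin n → Bool => f (Fin.cons false x) with hf0
    have hQ1 := auxQ_nonneg p g hg0 f1
    have hQ0 := auxQ_nonneg p g hg0 f0
    have hE : ∀ h : (Fin n → Bool) → ℝ, 0 ≤ pE p (fun x => |h x| ^ (1 / s)) := fun h =>
      aux_pE_nonneg p hp0 hp1 _ (fun x => by positivity)
    have hle : ∀ h : (Fin n → Bool) → ℝ,
        (√(auxQ p g h)) ^ (1 / s) ≤ pE p (fun x => |h x| ^ (1 / s)) := by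
      intro h
      have h1 : √(auxQ p g h) ≤ (pE p (fun x => |h x| ^ (1 / s))) ^ s := by
        apply Real.sqrt_le_iff.2 ⟨Real.rpow_nonneg (hE h) _, ?_⟩
        rw [← Real.rpow_mul_natCast (hE h)]
        refine (ih h).trans_eq ?_
        congr 1; push_cast; ring
      calc _ ≤ ((pE p (fun x => |h x| ^ (1 / s))) ^ s) ^ (1 / s) :=
            Real.rpow_le_rpow (Real.sqrt_nonneg _) h1 (by positivity)
        _ = _ := by
            rw [← Real.rpow_mul (hE h), mul_one_div_cancel hs0.ne', Real.rpow_one]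
    have hcs := aux_cs (fun S : Finset (Fin n) => g ^ S.card) (fhat p f1) (fhat p f0)
      (fun S => by positivity)
    rw [auxQ_succ p g hp0 hp1, aux_pE_succ p (fun x => |f x| ^ (1 / s))]
    have h2 := tp (√(auxQ p g f1)) (√(auxQ p g f0)) (Real.sqrt_nonneg _) (Real.sqrt_nonneg _)
    have h3 : (p * √(auxQ p g f1) ^ (1 / s) + (1 - p) * √(auxQ p g f0) ^ (1 / s)) ^ (2 * s) ≤
        (p * pE p (fun x => |f1 x| ^ (1 / s)) + (1 - p) * pE p (fun x => |f0 x| ^ (1 / s)))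
          ^ (2 * s) := by
      apply Real.rpow_le_rpow (by positivity) _ (by positivity)
      have := hle f1
      have := hle f0
      gcongr
    refine le_trans ?_ (h2.trans h3)
    have e1 := Real.sq_sqrt hQ1
    have e0 := Real.sq_sqrt hQ0
    have hc : 0 ≤ 2 * (p * (1 - p) * (1 - g)) := by
      have : 0 ≤ 1 - g := by linarith
      positivity
    have h4 := mul_le_mul_of_nonneg_left hcs hc
    change _ ≤ _ * (√(auxQ p g f1) * √(auxQ p g f0)) at h4
    generalize √(auxQ p g f1) = X at *
    generalize √(auxQ p g f0) = Y at *
    rw [← e1, ← e0]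
    refine (add_le_add_right h4 _).trans_eq ?_
    ring

lemma aux_adj (p δ : ℝ) {n : ℕ} (f h : (Fin n → Bool) → ℝ) :
    pE p (fun x => noiseOp p δ f x * h x) =
      ∑ S : Finset (Fin n), δ ^ S.card * fhat p f S * fhat p h S := by
  unfold noiseOp pE
  simp only [Finset.sum_mul, Finset.mul_sum]
  rw [Finset.sum_comm]
  refine Finset.sum_congr rfl fun S _ => ?_
  conv_rhs => rw [fhat.eq_1 p h, pE]
  rw [Finset.mul_sum]
  exact Finset.sum_congr rfl fun x _ => by ring

lemma aux_gamma (p q L : ℝ) (hp0 : 0 < p) (hp1 : p < 1) (hp' : p ≠ 1/2)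
    (hL : L = Real.log (min p (1 - p) / (1 - min p (1 - p)))) :
    Real.sinh (-(1/q) * L) / Real.sinh (-(1 - 1/q) * L) =
      Real.sinh ((1/q) * Real.log (p / (1 - p))) /
        Real.sinh ((1 - 1/q) * Real.log (p / (1 - p))) := by
  rw [neg_mul, neg_mul, Real.sinh_neg, Real.sinh_neg, neg_div_neg_eq, hL]
  rcases le_total p (1 - p) with h | h
  · rw [min_eq_left h]
  · rw [min_eq_right h, sub_sub_cancel]
    have : (1 - p) / p = (p / (1 - p))⁻¹ := by rw [inv_div]
    rw [this, Real.log_inv, mul_neg, mul_neg, Real.sinh_neg, Real.sinh_neg, neg_div_neg_eq]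

lemma aux_ratio (a b u : ℝ) (ha : 0 ≤ a) (hab : a ≤ b) :
    0 ≤ Real.sinh (a * u) / Real.sinh (b * u) ∧ Real.sinh (a * u) / Real.sinh (b * u) ≤ 1 := by
  have main : ∀ u : ℝ, 0 ≤ u →
      0 ≤ Real.sinh (a * u) / Real.sinh (b * u) ∧
        Real.sinh (a * u) / Real.sinh (b * u) ≤ 1 := by
    intro u hu
    have h1 : 0 ≤ Real.sinh (a * u) := Real.sinh_nonneg_iff.2 (by positivity)
    have h2 : Real.sinh (a * u) ≤ Real.sinh (b * u) :=
      Real.sinh_le_sinh.2 (mul_le_mul_of_nonneg_right hab hu)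
    exact ⟨div_nonneg h1 (h1.trans h2), div_le_one_of_le₀ h2 (h1.trans h2)⟩
  rcases le_total 0 u with h | h
  · exact main u h
  · have := main (-u) (by linarith)
    rwa [mul_neg, mul_neg, Real.sinh_neg, Real.sinh_neg, neg_div_neg_eq] at this

/-- Hypercontractivity for the p-biased measure, smoothing parameter (ii) of Latała–Oleszkiewicz:
γ = √( sinh(-(1/q)L) / sinh(-(1-1/q)L) ) with L = ln(λ/(1-λ)). -/
theorem stmt2 (p : ℝ) (hp : p ∈ Set.Ioo (0:ℝ) 1) (hp' : p ≠ 1/2) (q : ℝ) (hq : 2 ≤ q)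
    (L : ℝ) (hL : L = Real.log (min p (1 - p) / (1 - min p (1 - p))))
    (γ : ℝ)
    (hγ : γ = Real.sqrt (Real.sinh (-(1/q) * L) / Real.sinh (-(1 - 1/q) * L)))
    (n : ℕ) (f : (Fin n → Bool) → ℝ) :
    pNorm p q (noiseOp p γ f) ≤ pNorm p 2 f := by
  obtain ⟨hp0, hp1⟩ := hp
  have hq2 : 1 / q ≤ 1 / 2 := one_div_le_one_div_of_le (by norm_num) hq
  have hq0 : 0 < 1 / q := by positivity
  rw [aux_gamma p q L hp0 hp1 hp' hL] at hγ
  obtain ⟨hg0, hg1⟩ := aux_ratio (1 / q) (1 - 1 / q) (Real.log (p / (1 - p))) hq0.le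
    (by linarith)
  obtain ⟨g, hg⟩ : ∃ g, g = Real.sinh ((1/q) * Real.log (p / (1 - p))) /
      Real.sinh ((1 - 1/q) * Real.log (p / (1 - p))) := ⟨_, rfl⟩
  rw [← hg] at hγ hg0 hg1
  have hγ2 : γ ^ 2 = g := by rw [hγ, Real.sq_sqrt hg0]
  have hs0 : 0 < 1 - 1 / q := by linarith
  have hqp : 0 < q := by linarith
  set F := noiseOp p γ f with hF
  set h : (Fin n → Bool) → ℝ := fun x => SignType.sign (F x) * |F x| ^ (q - 1) with hh
  have hFh : (fun x => F x * h x) = fun x => |F x| ^ q := by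
    funext x
    rw [hh]
    have e : F x * (SignType.sign (F x) * |F x| ^ (q - 1)) = |F x| * |F x| ^ (q - 1) := by
      rw [← mul_assoc, self_mul_sign]
    simp only [e]
    rcases eq_or_ne (F x) 0 with h0 | h0
    · rw [h0, abs_zero, Real.zero_rpow hqp.ne', zero_mul]
    · rw [Real.rpow_sub_one (abs_ne_zero.2 h0)]
      have := abs_ne_zero.2 h0
      field_simp
  have hhr : (fun x => |h x| ^ (1 / (1 - 1 / q))) = fun x => |F x| ^ q := by
    funext x
    rw [hh]
    rcases eq_or_ne (F x) 0 with h0 | h0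
    · have hz : ((SignType.sign (F x) : SignType) : ℝ) * |F x| ^ (q - 1) = 0 := by
        rw [h0]; simp
      have hr : 1 / (1 - 1 / q) ≠ 0 := (one_div_pos.2 hs0).ne'
      simp only [hz]
      rw [h0, abs_zero, Real.zero_rpow hqp.ne', Real.zero_rpow hr]
    · have hsg : |((SignType.sign (F x) : SignType) : ℝ)| = 1 := by
        rcases lt_or_gt_of_ne h0 with h1 | h1
        · simp [sign_neg h1]
        · simp [sign_pos h1]
      simp only [abs_mul, hsg, one_mul]
      rw [abs_of_nonneg (by positivity : 0 ≤ |F x| ^ (q - 1)), ← Real.rpow_mul (abs_nonneg _)]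
      congr 1
      have : q - 1 ≠ 0 := by linarith
      field_simp
  have hM0 : 0 ≤ pE p (fun x => |F x| ^ q) :=
    aux_pE_nonneg p hp0 hp1 _ (fun x => by positivity)
  have hdual := aux_dual p q g hp0 hp1 hp' hq hg hg0 hg1 h
  rw [hhr] at hdual
  have hadj := aux_adj p γ f h
  rw [← hF, hFh] at hadj
  have hcs := aux_cs (fun _ : Finset (Fin n) => (1 : ℝ)) (fhat p f)
    (fun S => γ ^ S.card * fhat p h S) (fun _ => zero_le_one)
  have e1 : ∑ S : Finset (Fin n), 1 * fhat p f S ^ 2 = pE p (fun x => f x ^ 2) := by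
    rw [← aux_parseval p hp0 hp1 f]; simp [auxQ]
  have e2 : ∑ S : Finset (Fin n), 1 * (γ ^ S.card * fhat p h S) ^ 2 = auxQ p g h := by
    unfold auxQ
    refine Finset.sum_congr rfl fun S _ => ?_
    rw [← hγ2, one_mul, mul_pow, ← pow_mul, ← pow_mul, mul_comm 2]
  have e3 : ∑ S : Finset (Fin n), 1 * (fhat p f S * (γ ^ S.card * fhat p h S)) =
      pE p (fun x => |F x| ^ q) := by
    rw [hadj]
    exact Finset.sum_congr rfl fun S _ => by ring
  rw [e1, e2, e3] at hcs
  have hR : pNorm p 2 f = √(pE p (fun x => f x ^ 2)) := by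
    unfold pNorm
    rw [Real.sqrt_eq_rpow]
    simp
  rw [hR]
  unfold pNorm
  set M := pE p (fun x => |F x| ^ q) with hM
  have hsq : √(auxQ p g h) ≤ M ^ (1 - 1 / q) := by
    apply Real.sqrt_le_iff.2 ⟨Real.rpow_nonneg hM0 _, ?_⟩
    rw [← Real.rpow_mul_natCast hM0]
    refine hdual.trans_eq ?_
    congr 1; push_cast; ring
  have hfin := hcs.trans (mul_le_mul_of_nonneg_left hsq (Real.sqrt_nonneg _))
  rcases hM0.eq_or_lt with h0 | h0
  · rw [← h0, Real.zero_rpow hq0.ne']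
    exact Real.sqrt_nonneg _
  · have hpos := Real.rpow_pos_of_pos h0 (1 - 1 / q)
    refine le_of_mul_le_mul_right ?_ hpos
    refine le_trans (le_of_eq ?_) hfin
    rw [← Real.rpow_add h0]
    simp
end
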